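/- Let K be a number field, λ a nonzero prime ideal of O_K lying above 3 with e = v_λ(3), p a prime with p > 3e, and (a,b,c) ∈ O_K³ a nontrivial primitive solution of a^p + b^p = c^3 such that λ divides bO_K. Then the j-invariant of the Frey curve E = E_{a,b,c} satisfies v_λ(j_E) < 0 and p does not divide v_λ(j_E) (so E has potentially multiplicative reduction at λ). -/

import Mathlib

/-!
Write `B = bᵖ`.  For the Frey curve, `c₄ = 9c(9c³ - 8B)` and `Δ = 27B³(c³ - B) = 27 aᵖ b³ᵖ`.
By coprimality `a` and `c` are units at `λ`.  With `k = v_λ(b) ≥ 1`, we have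
`v_λ(8B) ≥ pk > 2e = v_λ(9c³)`, so `v_λ(c₄) = 4e` and
`v_λ(j) = 12e - (3e + 3pk) = 9e - 3pk`.  This is negative because `p > 3e`, and it is not
divisible by `p` because `p` is a prime larger than `3` and `e`, where `e ≥ 1`.

The basic properties of `idealVal` (`idealVal_mul`, `idealVal_pow`, `idealVal_eq_iff`) come from
unique factorization of ideals in the Dedekind domain `𝓞 K`.
-/

open NumberField

/-- The Frey curve `Y² + 3cXY + bᵖY = X³` associated to a solution of `aᵖ + bᵖ = c³`. -/
def FreyCurve {R : Type*} [CommRing R] (a b c : R) (p : ℕ) : WeierstrassCurve R :=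
  { a₁ := 3 * c, a₂ := 0, a₃ := b ^ p, a₄ := 0, a₆ := 0 }

/-- The `q`-adic valuation of a nonzero element `x` of the ring of integers of a number field:
the multiplicity of the prime ideal `q` in the principal ideal generated by `x`. -/
noncomputable def idealVal {K : Type*} [Field K] [NumberField K]
    (q : Ideal (𝓞 K)) (x : 𝓞 K) : ℕ :=
  multiplicity q (Ideal.span {x})

/-- The `q`-adic valuation of the `j`-invariant `j = c₄³/Δ` of the Frey curve, as an integer,
computed as `v_q(c₄³) − v_q(Δ)` (the valuation `v_q` on `K^×` extends that on `𝓞 K` by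
`v_q(x/y) = v_q(x) − v_q(y)`). -/
noncomputable def idealValJ {K : Type*} [Field K] [NumberField K]
    (q : Ideal (𝓞 K)) (W : WeierstrassCurve (𝓞 K)) : ℤ :=
  (idealVal q (W.c₄ ^ 3) : ℤ) - (idealVal q W.Δ : ℤ)

section idealVal

variable {K : Type*} [Field K] [NumberField K] {q : Ideal (𝓞 K)}

lemma finiteMultiplicity_span (hq : q.IsPrime) (hq0 : q ≠ ⊥) {x : 𝓞 K} (hx : x ≠ 0) :
    FiniteMultiplicity q (Ideal.span {x}) :=
  FiniteMultiplicity.of_prime_left (Ideal.prime_of_isPrime hq0 hq) (by simpa using hx)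

lemma idealVal_mul (hq : q.IsPrime) (hq0 : q ≠ ⊥) {x y : 𝓞 K} (hx : x ≠ 0) (hy : y ≠ 0) :
    idealVal q (x * y) = idealVal q x + idealVal q y := by
  have hxy := finiteMultiplicity_span hq hq0 (mul_ne_zero hx hy)
  unfold idealVal
  rw [← Ideal.span_singleton_mul_span_singleton] at hxy ⊢
  exact multiplicity_mul (Ideal.prime_of_isPrime hq0 hq) hxy

lemma idealVal_pow (hq : q.IsPrime) (hq0 : q ≠ ⊥) {x : 𝓞 K} (hx : x ≠ 0) (n : ℕ) :
    idealVal q (x ^ n) = n * idealVal q x := by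
  unfold idealVal
  rw [← Ideal.span_singleton_pow]
  exact (finiteMultiplicity_span hq hq0 hx).multiplicity_pow (Ideal.prime_of_isPrime hq0 hq)

lemma mem_pow_iff_le_idealVal (hq : q.IsPrime) (hq0 : q ≠ ⊥) {x : 𝓞 K} (hx : x ≠ 0) (n : ℕ) :
    x ∈ q ^ n ↔ n ≤ idealVal q x := by
  rw [← Ideal.dvd_span_singleton]
  exact (finiteMultiplicity_span hq hq0 hx).pow_dvd_iff_le_multiplicity

lemma idealVal_eq_zero (hq : q.IsPrime) (hq0 : q ≠ ⊥) {x : 𝓞 K} (hx : x ∉ q) :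
    idealVal q x = 0 := by
  have hx0 : x ≠ 0 := fun h0 => hx (h0 ▸ q.zero_mem)
  have := (mem_pow_iff_le_idealVal hq hq0 hx0 1).not.1 (by simpa using hx)
  omega

lemma idealVal_eq_iff (hq : q.IsPrime) (hq0 : q ≠ ⊥) {x : 𝓞 K} (hx : x ≠ 0) (n : ℕ) :
    idealVal q x = n ↔ x ∈ q ^ n ∧ x ∉ q ^ (n + 1) := by
  rw [mem_pow_iff_le_idealVal hq hq0 hx, mem_pow_iff_le_idealVal hq hq0 hx]
  omega

/-- The strict case of the ultrametric inequality: perturbing `x` by an element of strictly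
larger valuation keeps it nonzero and does not change its valuation. -/
lemma idealVal_sub_of_mem (hq : q.IsPrime) (hq0 : q ≠ ⊥) {x y : 𝓞 K} (hx : x ≠ 0)
    (hy : y ∈ q ^ (idealVal q x + 1)) :
    x - y ≠ 0 ∧ idealVal q (x - y) = idealVal q x := by
  obtain ⟨h1, h2⟩ := (idealVal_eq_iff hq hq0 hx _).1 rfl
  have h3 : x - y ∉ q ^ (idealVal q x + 1) := fun h => h2 (by simpa using add_mem h hy)
  have h4 : x - y ≠ 0 := fun h => h3 (h ▸ zero_mem _)
  exact ⟨h4, (idealVal_eq_iff hq hq0 h4 _).2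
    ⟨sub_mem h1 (Ideal.pow_le_pow_right (Nat.le_succ _) hy), h3⟩⟩

end idealVal

lemma freyCurve_c₄ {R : Type*} [CommRing R] (a b c : R) (p : ℕ) :
    (FreyCurve a b c p).c₄ = 3 ^ 2 * c * (3 ^ 2 * c ^ 3 - 8 * b ^ p) := by
  simp only [FreyCurve, WeierstrassCurve.c₄, WeierstrassCurve.b₂, WeierstrassCurve.b₄]
  ring

lemma freyCurve_Δ {R : Type*} [CommRing R] {a b c : R} {p : ℕ} (h : a ^ p + b ^ p = c ^ 3) :
    (FreyCurve a b c p).Δ = 3 ^ 3 * a ^ p * (b ^ p) ^ 3 := by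
  rw [← sub_eq_iff_eq_add.2 h.symm]
  simp only [FreyCurve, WeierstrassCurve.Δ, WeierstrassCurve.b₂, WeierstrassCurve.b₄,
    WeierstrassCurve.b₆, WeierstrassCurve.b₈]
  ring

/-- Let `λ` be a nonzero prime ideal of the ring of integers of a number field `K` lying above
`3`, with `e = v_λ(3)`, let `p > 3e` be a prime, and let `(a,b,c)` be a nontrivial primitive
solution of `aᵖ + bᵖ = c³` with `λ ∣ b𝓞 K`.  Then the `j`-invariant of the Frey curve
`E = E_{a,b,c}` satisfies `v_λ(j_E) < 0` and `p ∤ v_λ(j_E)`; that is, `E` has potentially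
multiplicative reduction at `λ`. -/
theorem frey_potentially_multiplicative_at_lambda {K : Type*} [Field K] [NumberField K]
    (lam : Ideal (𝓞 K)) (hlam : lam.IsPrime) (hlam0 : lam ≠ ⊥)
    (hlam3 : (3 : 𝓞 K) ∈ lam)
    (e : ℕ) (he : e = idealVal lam (3 : 𝓞 K))
    (p : ℕ) (hp : p.Prime) (hpe : 3 * e < p)
    (a b c : 𝓞 K) (habc : a * b * c ≠ 0)
    (hab : IsCoprime a b) (hac : IsCoprime a c) (hbc : IsCoprime b c)
    (h : a ^ p + b ^ p = c ^ 3)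
    (hb : lam ∣ Ideal.span {b}) :
    idealValJ lam (FreyCurve a b c p) < 0 ∧
    ¬ (p : ℤ) ∣ idealValJ lam (FreyCurve a b c p) := by
  have ha0 : a ≠ 0 := by rintro rfl; simp at habc
  have hb0 : b ≠ 0 := by rintro rfl; simp at habc
  have hc0 : c ≠ 0 := by rintro rfl; simp at habc
  have h30 : (3 : 𝓞 K) ≠ 0 := by norm_num
  have hbl : b ∈ lam := Ideal.dvd_span_singleton.1 hb
  have not_mem : ∀ x : 𝓞 K, IsCoprime b x → x ∉ lam := by
    rintro x ⟨u, v, huv⟩ hx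
    refine hlam.ne_top ((Ideal.eq_top_iff_one _).2 ?_)
    rw [← huv]
    exact add_mem (lam.mul_mem_left _ hbl) (lam.mul_mem_left _ hx)
  have hva : idealVal lam a = 0 := idealVal_eq_zero hlam hlam0 (not_mem a hab.symm)
  have hvc : idealVal lam c = 0 := idealVal_eq_zero hlam hlam0 (not_mem c hbc)
  have he1 : 1 ≤ e := he ▸ (mem_pow_iff_le_idealVal hlam hlam0 h30 1).1 (by simpa using hlam3)
  obtain ⟨k, hk⟩ : ∃ k, idealVal lam b = k := ⟨_, rfl⟩
  have hk1 : 1 ≤ k := hk ▸ (mem_pow_iff_le_idealVal hlam hlam0 hb0 1).1 (by simpa using hbl)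
  have hpk : p ≤ p * k := Nat.le_mul_of_pos_right p hk1
  have hv9 : idealVal lam (3 ^ 2 * c ^ 3) = 2 * e := by
    rw [idealVal_mul hlam hlam0 (pow_ne_zero _ h30) (pow_ne_zero _ hc0),
      idealVal_pow hlam hlam0 h30, idealVal_pow hlam hlam0 hc0, hvc, ← he]
    ring
  have hB : 8 * b ^ p ∈ lam ^ (idealVal lam (3 ^ 2 * c ^ 3) + 1) := by
    refine Ideal.mul_mem_left _ _ ?_
    rw [mem_pow_iff_le_idealVal hlam hlam0 (pow_ne_zero _ hb0), hv9,
      idealVal_pow hlam hlam0 hb0, hk]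
    omega
  obtain ⟨hd0, hd⟩ := idealVal_sub_of_mem hlam hlam0
    (mul_ne_zero (pow_ne_zero 2 h30) (pow_ne_zero 3 hc0)) hB
  have hvc₄ : idealVal lam ((FreyCurve a b c p).c₄ ^ 3) = 12 * e := by
    have h9c : (3 : 𝓞 K) ^ 2 * c ≠ 0 := mul_ne_zero (pow_ne_zero _ h30) hc0
    rw [freyCurve_c₄, idealVal_pow hlam hlam0 (mul_ne_zero h9c hd0),
      idealVal_mul hlam hlam0 h9c hd0, hd, hv9,
      idealVal_mul hlam hlam0 (pow_ne_zero _ h30) hc0, idealVal_pow hlam hlam0 h30, hvc, ← he]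
    ring
  have hvΔ : idealVal lam (FreyCurve a b c p).Δ = 3 * e + 3 * (p * k) := by
    rw [freyCurve_Δ h, idealVal_mul hlam hlam0
      (mul_ne_zero (pow_ne_zero _ h30) (pow_ne_zero _ ha0)) (pow_ne_zero _ (pow_ne_zero _ hb0)),
      idealVal_mul hlam hlam0 (pow_ne_zero _ h30) (pow_ne_zero _ ha0),
      idealVal_pow hlam hlam0 h30, idealVal_pow hlam hlam0 ha0,
      idealVal_pow hlam hlam0 (pow_ne_zero _ hb0), idealVal_pow hlam hlam0 hb0, hva, hk, ← he]
    ring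
  have hj : idealValJ lam (FreyCurve a b c p) = 9 * (e : ℤ) - p * (3 * k) := by
    rw [idealValJ, hvc₄, hvΔ]
    push_cast
    ring
  rw [hj]
  constructor
  · have : (p : ℤ) ≤ p * k := by exact_mod_cast hpk
    have : 3 * (e : ℤ) < p := by exact_mod_cast hpe
    linarith
  · intro hdvd
    have h9 : p ∣ 3 ^ 2 * e := by
      have := (dvd_sub_left (dvd_mul_right (p : ℤ) (3 * k))).1 hdvd
      exact_mod_cast this
    rcases hp.dvd_mul.1 h9 with h3 | h3
    · have := Nat.le_of_dvd (by norm_num) (hp.dvd_of_dvd_pow h3)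
      omega
    · have := Nat.le_of_dvd he1 h3
      omega
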